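/- Let Λ ⊆ {1,…,K} be such that G_Λ has linearly independent columns, let B ∈ ℂ^{N×ν}, λ > 0, and set X₀Λ = G_Λ† B and B_Λ = G_Λ X₀Λ, where G_Λ† = (G_Λ*G_Λ)^{−1}G_Λ*. Assume max_{j∉Λ} ‖(B − B_Λ)* g_j‖_{ℓ2} ≤ λ · ERC(Λ). Let X⋆ ∈ ℂ^{K×ν} be the matrix with rowsupp(X⋆) ⊆ Λ whose Λ-indexed rows form the unique minimizer of (1/2)‖B − G_Λ X‖_F² + λ J_{2,1}(X) over ℂ^{|Λ|×ν}. Then X⋆ is a global minimizer of L(X) = (1/2)‖B − GX‖_F² + λ J_{2,1}(X) over all of ℂ^{K×ν}; in particular, L attains its minimum at a matrix with row-support contained in Λ. -/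

import Mathlib

/-!
Write `R = B - G X⋆` for the residual and `C = Gᴴ R` for its correlations with the columns of `G`.

* Optimality of `X⋆` on `Λ` is used in its variational form (`variational_of_min`):
  `Re ⟨C_Λ, D⟩ ≤ λ (J(Z + D) - J(Z))` for every `D`, where `Z` is the restriction of `X⋆` to `Λ`.
  Testing with a single nonzero row gives `‖C_i‖ ≤ λ` for `i ∈ Λ` (`row_norm_le_of_variational`).
* As `G_Λ G_Λ†` is the Hermitian projection onto the range of `G_Λ`, one has
  `R = (B - B_Λ) + (G_Λ†)ᴴ C_Λ` (`residual_decomp`). Hence, for `j ∉ Λ`,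
  `‖C_j‖ ≤ ‖(B - B_Λ)ᴴ g_j‖ + ‖G_Λ† g_j‖₁ λ ≤ λ ERC + λ (1 - ERC) = λ`.
* Expanding the square around `X⋆` (`frob_sq_sub_mul`), these two facts say that `C` is `λ` times
  a subgradient of `J` at `X⋆`, so `X⋆` is a global minimizer.
-/

open Finset

/-- The `J_{2,1}` norm of a matrix: sum of the ℓ2 norms of its rows. -/
noncomputable def J21 {α β : Type*} [Fintype α] [Fintype β]
    (X : Matrix α β ℂ) : ℝ :=
  ∑ i, Real.sqrt (∑ t, ‖X i t‖ ^ 2)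

/-- The Frobenius norm of a complex matrix. -/
noncomputable def frob {α β : Type*} [Fintype α] [Fintype β]
    (X : Matrix α β ℂ) : ℝ :=
  Real.sqrt (∑ i, ∑ t, ‖X i t‖ ^ 2)

/-- The `i`-th row of a matrix as a vector of the Euclidean space. -/
noncomputable def erow {α β : Type*} (X : Matrix α β ℂ) (i : α) : EuclideanSpace ℂ β :=
  WithLp.toLp 2 (X i)

section Rows

variable {α β γ : Type*}

lemma erow_add (X Y : Matrix α β ℂ) (i : α) : erow (X + Y) i = erow X i + erow Y i := rfl

lemma erow_sub (X Y : Matrix α β ℂ) (i : α) : erow (X - Y) i = erow X i - erow Y i := rfl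

lemma erow_smul (c : ℂ) (X : Matrix α β ℂ) (i : α) : erow (c • X) i = c • erow X i := rfl

lemma erow_mul [Fintype γ] (A : Matrix α γ ℂ) (M : Matrix γ β ℂ) (i : α) :
    erow (A * M) i = ∑ k, A i k • erow M k := by
  ext t
  simp [erow, Matrix.mul_apply]

lemma norm_erow [Fintype β] (X : Matrix α β ℂ) (i : α) :
    ‖erow X i‖ = Real.sqrt (∑ t, ‖X i t‖ ^ 2) := by
  simp [erow, EuclideanSpace.norm_eq]

variable [Fintype α] [Fintype β] [Fintype γ]

lemma J21_eq (X : Matrix α β ℂ) : J21 X = ∑ i, ‖erow X i‖ := by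
  simp [J21, norm_erow]

lemma frob_sq (X : Matrix α β ℂ) : frob X ^ 2 = ∑ i, ‖erow X i‖ ^ 2 := by
  unfold frob
  rw [Real.sq_sqrt (by positivity)]
  refine Finset.sum_congr rfl fun i _ => ?_
  rw [norm_erow, Real.sq_sqrt (by positivity)]

/-- Adjointness `⟨R, G D⟩ = ⟨Gᴴ R, D⟩` for the Frobenius inner product. -/
lemma sum_inner_mul (R : Matrix α β ℂ) (G : Matrix α γ ℂ) (D : Matrix γ β ℂ) :
    ∑ n, inner ℂ (erow R n) (erow (G * D) n) =
      ∑ k, inner ℂ (erow (G.conjTranspose * R) k) (erow D k) := by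
  simp only [erow_mul, inner_sum, sum_inner, inner_smul_left, inner_smul_right,
    Matrix.conjTranspose_apply]
  rw [Finset.sum_comm]
  simp

lemma frob_sq_sub_mul (R : Matrix α β ℂ) (G : Matrix α γ ℂ) (D : Matrix γ β ℂ) :
    frob (R - G * D) ^ 2 = frob R ^ 2
      - 2 * ∑ k, (inner ℂ (erow (G.conjTranspose * R) k) (erow D k)).re
      + frob (G * D) ^ 2 := by
  have h := congrArg Complex.re (sum_inner_mul R G D)
  rw [Complex.re_sum, Complex.re_sum] at h
  rw [← h, frob_sq, frob_sq, frob_sq, Finset.mul_sum, ← Finset.sum_sub_distrib,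
    ← Finset.sum_add_distrib]
  refine Finset.sum_congr rfl fun n _ => ?_
  rw [erow_sub]
  exact norm_sub_sq (𝕜 := ℂ) _ _

/-- First-order optimality: comparing `Z` with `Z + t D`, using convexity of `J` on the segment
and letting `t → 0`. -/
lemma variational_of_min (A : Matrix α γ ℂ) (B : Matrix α β ℂ) (lam : ℝ) (hlam : 0 < lam)
    (Z : Matrix γ β ℂ)
    (hmin : ∀ Y : Matrix γ β ℂ, (1 / 2) * frob (B - A * Z) ^ 2 + lam * J21 Z ≤
      (1 / 2) * frob (B - A * Y) ^ 2 + lam * J21 Y) (D : Matrix γ β ℂ) :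
    ∑ k, (inner ℂ (erow (A.conjTranspose * (B - A * Z)) k) (erow D k)).re ≤
      lam * (J21 (Z + D) - J21 Z) := by
  set ρ := ∑ k, (inner ℂ (erow (A.conjTranspose * (B - A * Z)) k) (erow D k)).re with hρ
  have key : ∀ t : ℝ, 0 < t → t ≤ 1 →
      ρ ≤ lam * (J21 (Z + D) - J21 Z) + t * (frob (A * D) ^ 2 / 2) := by
    intro t ht ht1
    have h := hmin (Z + (t : ℂ) • D)
    have e : B - A * (Z + (t : ℂ) • D) = (B - A * Z) - A * ((t : ℂ) • D) := by
      rw [Matrix.mul_add]; abel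
    rw [e, frob_sq_sub_mul (B - A * Z)] at h
    have h1 : ∑ k, (inner ℂ (erow (A.conjTranspose * (B - A * Z)) k)
        (erow ((t : ℂ) • D) k)).re = t * ρ := by
      rw [hρ, Finset.mul_sum]
      refine Finset.sum_congr rfl fun k _ => ?_
      rw [erow_smul, inner_smul_right, Complex.re_ofReal_mul]
    have h2 : frob (A * ((t : ℂ) • D)) ^ 2 = t ^ 2 * frob (A * D) ^ 2 := by
      rw [Matrix.mul_smul, frob_sq, frob_sq, Finset.mul_sum]
      refine Finset.sum_congr rfl fun k _ => ?_
      rw [erow_smul, norm_smul, mul_pow, Complex.norm_real, Real.norm_eq_abs, sq_abs]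
    have h3 : J21 (Z + (t : ℂ) • D) ≤ (1 - t) * J21 Z + t * J21 (Z + D) := by
      rw [J21_eq, J21_eq, J21_eq, Finset.mul_sum, Finset.mul_sum, ← Finset.sum_add_distrib]
      refine Finset.sum_le_sum fun k _ => ?_
      have e2 : erow (Z + (t : ℂ) • D) k =
          ((1 - t : ℝ) : ℂ) • erow Z k + (t : ℂ) • erow (Z + D) k := by
        rw [erow_add, erow_add, erow_smul]
        push_cast
        module
      rw [e2]
      refine (norm_add_le _ _).trans (le_of_eq ?_)
      rw [norm_smul, norm_smul, Complex.norm_real, Complex.norm_real,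
        Real.norm_of_nonneg (by linarith), Real.norm_of_nonneg ht.le]
    rw [h1, h2] at h
    have h4 := mul_le_mul_of_nonneg_left h3 hlam.le
    refine le_of_mul_le_mul_left ?_ ht
    nlinarith
  refine le_of_forall_pos_le_add fun ε hε => ?_
  set Q := frob (A * D) ^ 2 / 2 with hQ
  have hQ0 : 0 ≤ Q := by positivity
  -- With `t = min 1 (ε / (Q + 1))` the quadratic remainder `t * Q` is at most `ε`.
  have hq : 0 < ε / (Q + 1) := by positivity
  refine (key (min 1 (ε / (Q + 1))) (lt_min one_pos hq) (min_le_left _ _)).trans ?_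
  have h5 : min 1 (ε / (Q + 1)) * Q ≤ ε / (Q + 1) * (Q + 1) :=
    mul_le_mul (min_le_right _ _) (by linarith) hQ0 hq.le
  rw [div_mul_cancel₀ _ (by positivity)] at h5
  linarith

lemma row_norm_le_of_variational (lam : ℝ) (Z U : Matrix γ β ℂ)
    (h : ∀ D : Matrix γ β ℂ, ∑ k, (inner ℂ (erow U k) (erow D k)).re ≤
      lam * (J21 (Z + D) - J21 Z)) (hlam : 0 < lam) (i : γ) : ‖erow U i‖ ≤ lam := by
  classical
  -- Test direction: the `i`-th row of `U`, all other rows zero.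
  set D : Matrix γ β ℂ := fun k => if k = i then U k else 0 with hD
  have hrow : ∀ k, erow D k = if k = i then erow U k else 0 := by
    intro k
    by_cases hk : k = i
    · simp [erow, hD, hk]
    · simp [erow, hD, hk]
  have h1 : ∑ k, (inner ℂ (erow U k) (erow D k)).re = ‖erow U i‖ ^ 2 := by
    rw [Finset.sum_eq_single i]
    · rw [hrow, if_pos rfl]
      exact inner_self_eq_norm_sq (𝕜 := ℂ) _
    · intro k _ hk
      simp [hrow, hk]
    · simp
  have h2 : J21 (Z + D) - J21 Z ≤ ‖erow U i‖ := by
    have : J21 (Z + D) ≤ J21 Z + ∑ k, ‖erow D k‖ := by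
      rw [J21_eq, J21_eq, ← Finset.sum_add_distrib]
      exact Finset.sum_le_sum fun k _ => by rw [erow_add]; exact norm_add_le _ _
    have h3 : ∑ k, ‖erow D k‖ = ‖erow U i‖ := by
      rw [Finset.sum_eq_single i]
      · rw [hrow, if_pos rfl]
      · intro k _ hk
        simp [hrow, hk]
      · simp
    linarith
  have h3 := (h1 ▸ h D).trans (mul_le_mul_of_nonneg_left h2 hlam.le)
  rcases (norm_nonneg (erow U i)).eq_or_lt with h0 | h0
  · rw [← h0]; exact hlam.le
  · refine le_of_mul_le_mul_right ?_ h0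
    rwa [← sq]

open scoped ComplexOrder in
/-- For any `Z`, the part of the residual `B - A Z` in the range of `A` is recovered from the
correlations `Aᴴ (B - A Z)` through the adjoint of the pseudo-inverse. -/
lemma residual_decomp {δ : Type*} [DecidableEq γ] (A : Matrix α γ ℂ)
    (hA : Function.Injective A.mulVec) (B : Matrix α δ ℂ) (Z : Matrix γ δ ℂ)
    (P : Matrix γ α ℂ) (hP : P = (A.conjTranspose * A)⁻¹ * A.conjTranspose) :
    B - A * Z = (B - A * (P * B)) +
      P.conjTranspose * (A.conjTranspose * (B - A * Z)) := by
  have hdet : IsUnit (A.conjTranspose * A).det :=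
    (Matrix.isUnit_iff_isUnit_det _).1 (Matrix.PosDef.conjTranspose_mul_self A hA).isUnit
  have hPA : P * A = 1 := by
    rw [hP, Matrix.mul_assoc, Matrix.nonsing_inv_mul _ hdet]
  have hH : P.conjTranspose * A.conjTranspose = A * P := by
    rw [hP]
    simp [Matrix.conjTranspose_mul, Matrix.conjTranspose_nonsing_inv, Matrix.mul_assoc]
  rw [← Matrix.mul_assoc P.conjTranspose, hH, Matrix.mul_sub, Matrix.mul_assoc, Matrix.mul_assoc,
    ← Matrix.mul_assoc P A Z, hPA, Matrix.one_mul]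
  abel

end Rows

/-- Let `Λ` index linearly independent columns of `G`, let
`X₀Λ = G_Λ† B`, `B_Λ = G_Λ X₀Λ`, and assume
`max_{j∉Λ} ‖(B − B_Λ)* g_j‖₂ ≤ λ ERC(Λ)`. If `X⋆` has row-support inside `Λ` and its
`Λ`-indexed rows form the (unique) minimizer of the `Λ`-restricted Lagrangian
`½‖B − G_Λ X‖_F² + λ J_{2,1}(X)`, then `X⋆` is a global minimizer of
`L(X) = ½‖B − GX‖_F² + λ J_{2,1}(X)` over `ℂ^{K×ν}`. -/
theorem erc_condition_global_minimizer_supported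
    (N K ν : ℕ) (hN : 0 < N) (hK : 0 < K) (hν : 0 < ν)
    (G : Matrix (Fin N) (Fin K) ℂ) (Λ : Finset (Fin K))
    (hind : LinearIndependent ℂ (fun j : ↥Λ => fun i => G i (j : Fin K)))
    (B : Matrix (Fin N) (Fin ν) ℂ) (lam : ℝ) (hlam : 0 < lam)
    (GΛ : Matrix (Fin N) ↥Λ ℂ) (hGΛ : GΛ = Matrix.of fun (i : Fin N) (j : ↥Λ) => G i (j : Fin K))
    (Gpinv : Matrix ↥Λ (Fin N) ℂ)
    (hGpinv : Gpinv = (GΛ.conjTranspose * GΛ)⁻¹ * GΛ.conjTranspose)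
    (X0Λ : Matrix ↥Λ (Fin ν) ℂ) (hX0Λ : X0Λ = Gpinv * B)
    (BΛ : Matrix (Fin N) (Fin ν) ℂ) (hBΛ : BΛ = GΛ * X0Λ)
    (ERC : ℝ)
    (hERC : ERC = 1 - ⨆ j : {j : Fin K // j ∉ Λ},
      ∑ i : ↥Λ, ‖Gpinv.mulVec (fun n => G n (j : Fin K)) i‖)
    (hcond : ∀ j ∉ Λ,
      Real.sqrt (∑ t, ‖∑ i, (starRingEnd ℂ) ((B - BΛ) i t) * G i j‖ ^ 2) ≤
        lam * ERC)
    (Xstar : Matrix (Fin K) (Fin ν) ℂ)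
    (hsupp : ∀ i ∉ Λ, Xstar i = 0)
    (hminΛ : ∀ Y : Matrix ↥Λ (Fin ν) ℂ,
      (1 / 2) * (frob (B - GΛ * Matrix.of (fun (i : ↥Λ) t => Xstar (i : Fin K) t))) ^ 2 +
          lam * J21 (Matrix.of (fun (i : ↥Λ) t => Xstar (i : Fin K) t)) ≤
        (1 / 2) * (frob (B - GΛ * Y)) ^ 2 + lam * J21 Y) :
    ∀ X : Matrix (Fin K) (Fin ν) ℂ,
      (1 / 2) * (frob (B - G * Xstar)) ^ 2 + lam * J21 Xstar ≤
        (1 / 2) * (frob (B - G * X)) ^ 2 + lam * J21 X := by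
  intro X
  set Z : Matrix ↥Λ (Fin ν) ℂ := Matrix.of (fun (i : ↥Λ) t => Xstar (i : Fin K) t) with hZ
  have hinj : Function.Injective GΛ.mulVec := by
    rw [Matrix.mulVec_injective_iff, hGΛ]
    exact hind
  have hGX : G * Xstar = GΛ * Z := by
    ext n t
    rw [Matrix.mul_apply, Matrix.mul_apply, hGΛ, hZ]
    simp only [Matrix.of_apply]
    rw [Finset.sum_coe_sort Λ (fun k => G n k * Xstar k t)]
    refine (Finset.sum_subset (Finset.subset_univ Λ) fun k _ hk => ?_).symm
    simp [hsupp k hk]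
  set R := B - GΛ * Z with hR
  have hvar := variational_of_min GΛ B lam hlam Z hminΛ
  have hU := row_norm_le_of_variational lam Z _ hvar hlam
  have hCΛ : ∀ i : ↥Λ, erow (G.conjTranspose * R) i = erow (GΛ.conjTranspose * R) i := by
    intro i
    rw [erow_mul, erow_mul, hGΛ]
    rfl
  have hCout : ∀ j ∉ Λ, ‖erow (G.conjTranspose * R) j‖ ≤ lam := by
    intro j hj
    have hdec := residual_decomp GΛ hinj B Z Gpinv hGpinv
    rw [← hX0Λ, ← hBΛ, ← hR] at hdec
    have hrow : erow (G.conjTranspose * R) j = erow (G.conjTranspose * (B - BΛ)) j +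
        ∑ i, star (Gpinv.mulVec (fun n => G n j) i) • erow (GΛ.conjTranspose * R) i := by
      conv_lhs => rw [hdec, Matrix.mul_add, erow_add, ← Matrix.mul_assoc,
        erow_mul (G.conjTranspose * Gpinv.conjTranspose)]
      congr 1
      refine Finset.sum_congr rfl fun i _ => ?_
      congr 1
      simp [Matrix.mul_apply, Matrix.mulVec, dotProduct, mul_comm]
    have h1 : ‖erow (G.conjTranspose * (B - BΛ)) j‖ ≤ lam * ERC := by
      refine le_of_eq_of_le ?_ (hcond j hj)
      rw [norm_erow]
      congr 1
      refine Finset.sum_congr rfl fun t _ => ?_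
      congr 1
      rw [← norm_star (∑ i, (starRingEnd ℂ) ((B - BΛ) i t) * G i j), Matrix.mul_apply]
      congr 1
      simp [mul_comm]
    have h2 : ‖∑ i, star (Gpinv.mulVec (fun n => G n j) i) • erow (GΛ.conjTranspose * R) i‖ ≤
        (∑ i : ↥Λ, ‖Gpinv.mulVec (fun n => G n j) i‖) * lam := by
      rw [Finset.sum_mul]
      refine (norm_sum_le _ _).trans (Finset.sum_le_sum fun i _ => ?_)
      rw [norm_smul, norm_star]
      exact mul_le_mul_of_nonneg_left (hU i) (norm_nonneg _)
    have h3 : ∑ i : ↥Λ, ‖Gpinv.mulVec (fun n => G n j) i‖ ≤ 1 - ERC := by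
      rw [hERC, sub_sub_cancel]
      exact le_ciSup (f := fun j : {j : Fin K // j ∉ Λ} =>
        ∑ i : ↥Λ, ‖Gpinv.mulVec (fun n => G n (j : Fin K)) i‖)
        (Set.finite_range _).bddAbove ⟨j, hj⟩
    have h4 := mul_le_mul_of_nonneg_right h3 hlam.le
    rw [hrow]
    refine (norm_add_le _ _).trans ?_
    linarith
  have hexp := frob_sq_sub_mul R G (X - Xstar)
  have e : R - G * (X - Xstar) = B - G * X := by
    rw [Matrix.mul_sub, hGX, hR]; abel
  rw [e] at hexp
  have hsq : 0 ≤ frob (G * (X - Xstar)) ^ 2 := sq_nonneg _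
  have hsplit : ∀ f : Fin K → ℝ, ∑ k, f k = ∑ i : ↥Λ, f i + ∑ k ∈ Λᶜ, f k := by
    intro f
    rw [Finset.sum_coe_sort Λ f, Finset.sum_add_sum_compl]
  set D : Matrix ↥Λ (Fin ν) ℂ := Matrix.of fun (i : ↥Λ) t => (X - Xstar) i t with hD
  have hin := hvar D
  have hout : ∑ k ∈ Λᶜ, (inner ℂ (erow (G.conjTranspose * R) k) (erow (X - Xstar) k)).re ≤
      lam * ∑ k ∈ Λᶜ, ‖erow X k‖ := by
    rw [Finset.mul_sum]
    refine Finset.sum_le_sum fun k hk => ?_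
    have hk' : k ∉ Λ := Finset.mem_compl.1 hk
    have hx : erow (X - Xstar) k = erow X k := by
      have h0 : erow Xstar k = 0 := by simp [erow, hsupp k hk']
      rw [erow_sub, h0, sub_zero]
    rw [hx]
    exact (re_inner_le_norm (𝕜 := ℂ) _ _).trans
      (mul_le_mul_of_nonneg_right (hCout k hk') (norm_nonneg _))
  have hJZ : J21 Xstar = J21 Z := by
    rw [J21_eq, hsplit, J21_eq]
    have h0 : ∑ k ∈ Λᶜ, ‖erow Xstar k‖ = 0 :=
      Finset.sum_eq_zero fun k hk => by simp [erow, hsupp k (Finset.mem_compl.1 hk)]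
    rw [h0, add_zero]
    rfl
  have hJX : J21 X = J21 (Z + D) + ∑ k ∈ Λᶜ, ‖erow X k‖ := by
    rw [J21_eq, hsplit, J21_eq]
    congr 1
    refine Finset.sum_congr rfl fun i _ => ?_
    congr 1
    ext t
    simp [erow, hZ, hD]
  rw [hsplit] at hexp
  have hin' : ∑ i : ↥Λ, (inner ℂ (erow (G.conjTranspose * R) i) (erow (X - Xstar) i)).re ≤
      lam * (J21 (Z + D) - J21 Z) := by
    refine le_of_eq_of_le (Finset.sum_congr rfl fun i _ => ?_) hin
    rw [hCΛ]
    rfl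
  rw [hGX, hJZ, hJX, hexp]
  linarith
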